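/- There is no bipartite graph G = (A, B, E) such that the multiset of degrees of the vertices of A is {5,5,5,4,4}, the multiset of degrees of the vertices of B is {5,5,4,3,3,3}, and every degree-3 vertex of B is adjacent to all three degree-5 vertices of A. -/

import Mathlib

/-!
A degree-3 vertex of `B` is adjacent to the three degree-5 vertices of `A`, hence to nothing else.
So a degree-4 vertex of `A` has all its neighbours among the vertices of `B` of degree other
than 3; there are only three of these, a contradiction.
-/

/-- There is no bipartite graph with part degree multisets `{5,5,5,4,4}` and
`{5,5,4,3,3,3}` in which every degree-3 vertex of `B` is adjacent to all three
degree-5 vertices of `A`. -/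
theorem stmt_10 {V : Type} [Fintype V] [DecidableEq V]
    (G : SimpleGraph V) [DecidableRel G.Adj]
    (A B : Finset V)
    (hdisj : Disjoint A B) (hcover : A ∪ B = Finset.univ)
    (hbip : ∀ u v : V, G.Adj u v → (u ∈ A ∧ v ∈ B) ∨ (u ∈ B ∧ v ∈ A))
    (hA : Multiset.map (fun v => G.degree v) A.val = {5,5,5,4,4})
    (hB : Multiset.map (fun v => G.degree v) B.val = {5,5,4,3,3,3})
    (hadj : ∀ b ∈ B, G.degree b = 3 → ∀ a ∈ A, G.degree a = 5 → G.Adj a b) :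
    False := by
  classical
  have hA5 : (A.filter (fun v => G.degree v = 5)).card = 3 := by
    have h := Multiset.countP_map (fun v => G.degree v) A.val (fun d => d = 5)
    rw [hA] at h
    exact h.symm.trans (by decide)
  have hB3 : (B.filter (fun v => G.degree v ≠ 3)).card = 3 := by
    have h := Multiset.countP_map (fun v => G.degree v) B.val (fun d => d ≠ 3)
    rw [hB] at h
    exact h.symm.trans (by decide)
  obtain ⟨a, haA, ha4⟩ : ∃ a ∈ A, G.degree a = 4 := by
    have h : 4 ∈ Multiset.map (fun v => G.degree v) A.val := by rw [hA]; decide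
    simpa using h
  have hsub : G.neighborFinset a ⊆ B.filter (fun v => G.degree v ≠ 3) := by
    intro b hb
    rw [SimpleGraph.mem_neighborFinset] at hb
    have hbB : b ∈ B := by
      rcases hbip a b hb with h | h
      · exact h.2
      · exact absurd h.1 (Finset.disjoint_left.mp hdisj haA)
    refine Finset.mem_filter.mpr ⟨hbB, fun hb3 => ?_⟩
    -- Otherwise `b` has `a` and the three degree-5 vertices of `A` as neighbours.
    have hs : insert a (A.filter (fun v => G.degree v = 5)) ⊆ G.neighborFinset b := by
      intro x hx
      rw [SimpleGraph.mem_neighborFinset]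
      rcases Finset.mem_insert.mp hx with rfl | hx
      · exact hb.symm
      · have hx := Finset.mem_filter.mp hx
        exact (hadj b hbB hb3 x hx.1 hx.2).symm
    have hc := Finset.card_le_card hs
    rw [Finset.card_insert_of_notMem (by simp [ha4]), hA5,
      SimpleGraph.card_neighborFinset_eq_degree, hb3] at hc
    omega
  have hc := Finset.card_le_card hsub
  rw [SimpleGraph.card_neighborFinset_eq_degree, ha4, hB3] at hc
  omega
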